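/- Assume t₀ = min 𝕋 and that f satisfies (H∞), (H^rd_loc-Lip) and (H^forw_stab). Let (q,I_𝕋) be the maximal solution of (Δ-CP) and suppose it is not global, so that I_𝕋 = [t₀,b)_𝕋 with b ∈ (t₀,+∞)_𝕋 a left-dense point of 𝕋. Then q cannot be continuously extended at t = b with a value in Ω; that is, there is no q_b ∈ Ω such that q(t) → q_b as t → b with t ∈ [t₀,b)_𝕋. -/

import Mathlib

/-!
If `q(t) → q_b ∈ Ω` as `t → b⁻`, then setting `q(b) = q_b` extends the solution to `[t₀,b]_𝕋`,
which contradicts maximality. The equation itself is inherited Δ-a.e. from the intervals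
`[t₀,c]_𝕋` with `c < b` (left-density of `b` keeps `σ(t) < b` for `t < b`), so the only point at
issue is absolute continuity up to `b`. The extended function is continuous on the compact set
`[t₀,b]_𝕋`, so its image is a compact subset of `Ω` and (H∞) bounds `q^Δ` by a constant `M`
Δ-a.e.; hence `q` is `M`-Lipschitz on `[t₀,b)_𝕋`, on `[t₀,b]_𝕋` by passing to the limit, and
therefore absolutely continuous.

The step from a bounded Δ-derivative to the Lipschitz estimate is `norm_sub_le_of_deltaAC`. The
set consisting of the points where the derivative bound fails, the right-scattered points and the
right endpoint is Lebesgue-null, so it lies in an open set `O` of small measure. Induction along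
the time scale (`chain_exists`) joins two points by a finite increasing chain in which every link
either satisfies the rate bound `M + ε` or lies in `O`; a right-scattered point, being an atom of
the Δ-measure, always satisfies the derivative bound and gives a good link to its successor.
Absolute continuity makes the total increment over the links in `O` small (`sum_bad_steps_lt`);
since adjacent links share an endpoint, the links of even and of odd index are treated separately.
-/

open MeasureTheory Set Filter Classical

noncomputable section
open scoped Classical

/-- The forward jump operator `σ` of a time scale `T`. -/
def tsSigma (T : Set ℝ) (t : ℝ) : ℝ :=
  if ({s | s ∈ T ∧ t < s}).Nonempty then sInf {s | s ∈ T ∧ t < s} else t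

/-- The backward jump operator `ρ` of a time scale `T`. -/
def tsRho (T : Set ℝ) (t : ℝ) : ℝ :=
  if ({s | s ∈ T ∧ s < t}).Nonempty then sSup {s | s ∈ T ∧ s < t} else t

/-- The graininess function `μ(t) = σ(t) - t`. -/
def tsGrain (T : Set ℝ) (t : ℝ) : ℝ := tsSigma T t - t

/-- `t` is a right-scattered point of `T`. -/
def RightScattered (T : Set ℝ) (t : ℝ) : Prop := t < tsSigma T t

/-- `t` is a right-dense point of `T`. -/
def RightDense (T : Set ℝ) (t : ℝ) : Prop := tsSigma T t = t

/-- `t` is a left-scattered point of `T`. -/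
def LeftScattered (T : Set ℝ) (t : ℝ) : Prop := tsRho T t < t

/-- `t` is a left-dense point of `T`. -/
def LeftDense (T : Set ℝ) (t : ℝ) : Prop := tsRho T t = t

/-- `𝕋 \ {sup 𝕋}`: the time scale minus its maximum (if the maximum exists). -/
def tsUpDomain (T : Set ℝ) : Set ℝ := {t | t ∈ T ∧ ¬ IsGreatest T t}

/-- The Lebesgue Δ-measure on the time scale `T`: Lebesgue measure restricted to `T`
plus `Σ_{r ∈ ℛ} μ(r)·δ_r` over right-scattered points `r`. -/
def deltaMeasure (T : Set ℝ) : Measure ℝ :=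
  volume.restrict T +
    Measure.sum (fun r : {t : ℝ // t ∈ T ∧ RightScattered T t} =>
      ENNReal.ofReal (tsGrain T r.1) • Measure.dirac r.1)

/-- Δ-differentiability of `q` at `t`, with Δ-derivative `q'`. -/
def HasDeltaDerivAt {n : ℕ} (T : Set ℝ) (q : ℝ → EuclideanSpace ℝ (Fin n))
    (q' : EuclideanSpace ℝ (Fin n)) (t : ℝ) : Prop :=
  ∀ ε > (0:ℝ), ∃ U ∈ nhds t, ∀ s ∈ U ∩ T,
    ‖q (tsSigma T t) - q s - (tsSigma T t - s) • q'‖ ≤ ε * |tsSigma T t - s|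

/-- Absolute continuity of `q` on `[a,b]_𝕋`. -/
def DeltaAC {n : ℕ} (T : Set ℝ) (a b : ℝ) (q : ℝ → EuclideanSpace ℝ (Fin n)) : Prop :=
  ∀ ε > (0:ℝ), ∃ δ > (0:ℝ), ∀ (m : ℕ) (u v : ℕ → ℝ),
    (∀ k < m, u k ∈ Icc a b ∩ T) → (∀ k < m, v k ∈ Icc a b ∩ T) →
    (∀ k < m, u k ≤ v k) →
    (∀ i < m, ∀ j < m, i ≠ j → Disjoint (Icc (u i) (v i)) (Icc (u j) (v j))) →
    (∑ k ∈ Finset.range m, (v k - u k)) < δ →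
    (∑ k ∈ Finset.range m, ‖q (v k) - q (u k)‖) < ε

/-- `f` is a Δ-Carathéodory function on `Ω × 𝕋\{sup 𝕋}`. -/
def DeltaCaratheodory {n : ℕ} (T : Set ℝ) (Ω : Set (EuclideanSpace ℝ (Fin n)))
    (f : EuclideanSpace ℝ (Fin n) → ℝ → EuclideanSpace ℝ (Fin n)) : Prop :=
  (∀ x ∈ Ω, AEMeasurable (fun t => f x t) ((deltaMeasure T).restrict (tsUpDomain T))) ∧
    ∀ᵐ t ∂((deltaMeasure T).restrict (tsUpDomain T)), ContinuousOn (fun x => f x t) Ω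

/-- Hypothesis (H∞): `f` is locally bounded. -/
def HInfty {n : ℕ} (T : Set ℝ) (Ω : Set (EuclideanSpace ℝ (Fin n)))
    (f : EuclideanSpace ℝ (Fin n) → ℝ → EuclideanSpace ℝ (Fin n)) : Prop :=
  ∀ K : Set (EuclideanSpace ℝ (Fin n)), K ⊆ Ω → IsCompact K →
    ∀ a ∈ T, ∀ b ∈ T, a < b →
      ∃ M : ℝ, 0 ≤ M ∧
        ∀ᵐ t ∂((deltaMeasure T).restrict (Ico a b ∩ T)), ∀ x ∈ K, ‖f x t‖ ≤ M

/-- Hypothesis (H^rd_loc-Lip): local Lipschitz continuity at right-dense points. -/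
def HrdLocLip {n : ℕ} (T : Set ℝ) (Ω : Set (EuclideanSpace ℝ (Fin n)))
    (f : EuclideanSpace ℝ (Fin n) → ℝ → EuclideanSpace ℝ (Fin n)) : Prop :=
  ∀ xb ∈ Ω, ∀ tb ∈ T, ¬ IsGreatest T tb → RightDense T tb →
    ∃ R > (0:ℝ), ∃ δ > (0:ℝ), ∃ L : ℝ, 0 ≤ L ∧
      Metric.closedBall xb R ⊆ Ω ∧ tb + δ ∈ T ∧
      ∀ᵐ t ∂((deltaMeasure T).restrict (Ico tb (tb + δ) ∩ T)),
        ∀ x₁ ∈ Metric.closedBall xb R, ∀ x₂ ∈ Metric.closedBall xb R,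
          ‖f x₁ t - f x₂ t‖ ≤ L * ‖x₁ - x₂‖

/-- Hypothesis (H^ld_loc-Lip): local Lipschitz continuity at left-dense points. -/
def HldLocLip {n : ℕ} (T : Set ℝ) (Ω : Set (EuclideanSpace ℝ (Fin n)))
    (f : EuclideanSpace ℝ (Fin n) → ℝ → EuclideanSpace ℝ (Fin n)) : Prop :=
  ∀ xb ∈ Ω, ∀ tb ∈ T, ¬ IsLeast T tb → LeftDense T tb →
    ∃ R > (0:ℝ), ∃ δ > (0:ℝ), ∃ L : ℝ, 0 ≤ L ∧
      Metric.closedBall xb R ⊆ Ω ∧ tb - δ ∈ T ∧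
      ∀ᵐ t ∂((deltaMeasure T).restrict (Ico (tb - δ) tb ∩ T)),
        ∀ x₁ ∈ Metric.closedBall xb R, ∀ x₂ ∈ Metric.closedBall xb R,
          ‖f x₁ t - f x₂ t‖ ≤ L * ‖x₁ - x₂‖

/-- Hypothesis (H^forw_stab): `G⁺(t) : x ↦ x + μ(t) f(x,t)` maps `Ω` into `Ω`. -/
def HforwStab {n : ℕ} (T : Set ℝ) (Ω : Set (EuclideanSpace ℝ (Fin n)))
    (f : EuclideanSpace ℝ (Fin n) → ℝ → EuclideanSpace ℝ (Fin n)) : Prop :=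
  ∀ t ∈ T, RightScattered T t → ∀ x ∈ Ω, x + tsGrain T t • f x t ∈ Ω

/-- Hypothesis (H^back_regr): `G⁺(t)` is a bijection from `Ω` onto `ℝⁿ`. -/
def HbackRegr {n : ℕ} (T : Set ℝ) (Ω : Set (EuclideanSpace ℝ (Fin n)))
    (f : EuclideanSpace ℝ (Fin n) → ℝ → EuclideanSpace ℝ (Fin n)) : Prop :=
  ∀ t ∈ T, RightScattered T t → Set.BijOn (fun x => x + tsGrain T t • f x t) Ω univ

/-- Hypothesis (H^back_stab): `G⁻(t) : x ↦ x - μ(t) f(x,t)` maps `Ω` into `Ω`. -/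
def HbackStab {n : ℕ} (T : Set ℝ) (Ω : Set (EuclideanSpace ℝ (Fin n)))
    (f : EuclideanSpace ℝ (Fin n) → ℝ → EuclideanSpace ℝ (Fin n)) : Prop :=
  ∀ t ∈ T, RightScattered T t → ∀ x ∈ Ω, x - tsGrain T t • f x t ∈ Ω

/-- Hypothesis (H^forw_regr): `G⁻(t)` is a bijection from `Ω` onto `ℝⁿ`. -/
def HforwRegr {n : ℕ} (T : Set ℝ) (Ω : Set (EuclideanSpace ℝ (Fin n)))
    (f : EuclideanSpace ℝ (Fin n) → ℝ → EuclideanSpace ℝ (Fin n)) : Prop :=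
  ∀ t ∈ T, RightScattered T t → Set.BijOn (fun x => x - tsGrain T t • f x t) Ω univ

/-- Hypothesis (H^glob_Lip): global Lipschitz continuity. -/
def HglobLip {n : ℕ} (T : Set ℝ) (Ω : Set (EuclideanSpace ℝ (Fin n)))
    (f : EuclideanSpace ℝ (Fin n) → ℝ → EuclideanSpace ℝ (Fin n)) : Prop :=
  ∃ L : ℝ, 0 ≤ L ∧
    ∀ᵐ t ∂((deltaMeasure T).restrict (tsUpDomain T)),
      ∀ x₁ ∈ Ω, ∀ x₂ ∈ Ω, ‖f x₁ t - f x₂ t‖ ≤ L * ‖x₁ - x₂‖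

/-- The relation `a ⊴ t₀ ⊴ b`. -/
def Trile (T : Set ℝ) (t₀ a b : ℝ) : Prop :=
  (IsLeast T t₀ ∧ a = t₀ ∧ t₀ < b) ∨
  (IsGreatest T t₀ ∧ a < t₀ ∧ t₀ = b) ∨
  (¬ IsLeast T t₀ ∧ ¬ IsGreatest T t₀ ∧ a < t₀ ∧ t₀ < b)

/-- `(q, [a,b]_𝕋)` is a solution of the non shifted Δ-Cauchy problem (Δ-CP). -/
def IsSolIcc {n : ℕ} (T : Set ℝ) (Ω : Set (EuclideanSpace ℝ (Fin n)))
    (f : EuclideanSpace ℝ (Fin n) → ℝ → EuclideanSpace ℝ (Fin n))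
    (t₀ : ℝ) (q₀ : EuclideanSpace ℝ (Fin n))
    (q : ℝ → EuclideanSpace ℝ (Fin n)) (a b : ℝ) : Prop :=
  (∀ t ∈ Icc a b ∩ T, q t ∈ Ω) ∧ DeltaAC T a b q ∧ q t₀ = q₀ ∧
    ∀ᵐ t ∂((deltaMeasure T).restrict (Ico a b ∩ T)),
      HasDeltaDerivAt T q (f (q t) t) t

/-- `(q, [a,b]_𝕋)` is a solution of the shifted Δ-Cauchy problem (Δ-CP^σ). -/
def IsSolIccS {n : ℕ} (T : Set ℝ) (Ω : Set (EuclideanSpace ℝ (Fin n)))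
    (f : EuclideanSpace ℝ (Fin n) → ℝ → EuclideanSpace ℝ (Fin n))
    (t₀ : ℝ) (q₀ : EuclideanSpace ℝ (Fin n))
    (q : ℝ → EuclideanSpace ℝ (Fin n)) (a b : ℝ) : Prop :=
  (∀ t ∈ Icc a b ∩ T, q t ∈ Ω) ∧ DeltaAC T a b q ∧ q t₀ = q₀ ∧
    ∀ᵐ t ∂((deltaMeasure T).restrict (Ico a b ∩ T)),
      HasDeltaDerivAt T q (f (q (tsSigma T t)) t) t

/-- `I_𝕋 ∈ 𝕀`: `I` is a real interval containing points `a, b` of `T` with `a ⊴ t₀ ⊴ b`. -/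
def MemI (T : Set ℝ) (t₀ : ℝ) (I : Set ℝ) : Prop :=
  I.OrdConnected ∧ ∃ a ∈ I ∩ T, ∃ b ∈ I ∩ T, Trile T t₀ a b

/-- `(q, I_𝕋)` is a solution of (Δ-CP). -/
def IsSol {n : ℕ} (T : Set ℝ) (Ω : Set (EuclideanSpace ℝ (Fin n)))
    (f : EuclideanSpace ℝ (Fin n) → ℝ → EuclideanSpace ℝ (Fin n))
    (t₀ : ℝ) (q₀ : EuclideanSpace ℝ (Fin n))
    (q : ℝ → EuclideanSpace ℝ (Fin n)) (I : Set ℝ) : Prop :=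
  MemI T t₀ I ∧ (∀ t ∈ I ∩ T, q t ∈ Ω) ∧
    ∀ a ∈ I ∩ T, ∀ b ∈ I ∩ T, Trile T t₀ a b → IsSolIcc T Ω f t₀ q₀ q a b

/-- `(q, I_𝕋)` is a solution of (Δ-CP^σ). -/
def IsSolS {n : ℕ} (T : Set ℝ) (Ω : Set (EuclideanSpace ℝ (Fin n)))
    (f : EuclideanSpace ℝ (Fin n) → ℝ → EuclideanSpace ℝ (Fin n))
    (t₀ : ℝ) (q₀ : EuclideanSpace ℝ (Fin n))
    (q : ℝ → EuclideanSpace ℝ (Fin n)) (I : Set ℝ) : Prop :=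
  MemI T t₀ I ∧ (∀ t ∈ I ∩ T, q t ∈ Ω) ∧
    ∀ a ∈ I ∩ T, ∀ b ∈ I ∩ T, Trile T t₀ a b → IsSolIccS T Ω f t₀ q₀ q a b

/-- `(q₁, I₁_𝕋)` is an extension of `(q, I_𝕋)`. -/
def SolExtends {n : ℕ} (T : Set ℝ) (q₁ : ℝ → EuclideanSpace ℝ (Fin n)) (I₁ : Set ℝ)
    (q : ℝ → EuclideanSpace ℝ (Fin n)) (I : Set ℝ) : Prop :=
  I ∩ T ⊆ I₁ ∩ T ∧ EqOn q₁ q (I ∩ T)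

/-- `(q, I_𝕋)` is a maximal solution of (Δ-CP). -/
def IsMaxSol {n : ℕ} (T : Set ℝ) (Ω : Set (EuclideanSpace ℝ (Fin n)))
    (f : EuclideanSpace ℝ (Fin n) → ℝ → EuclideanSpace ℝ (Fin n))
    (t₀ : ℝ) (q₀ : EuclideanSpace ℝ (Fin n))
    (q : ℝ → EuclideanSpace ℝ (Fin n)) (I : Set ℝ) : Prop :=
  IsSol T Ω f t₀ q₀ q I ∧
    ∀ q₁ I₁, IsSol T Ω f t₀ q₀ q₁ I₁ → SolExtends T q₁ I₁ q I → I₁ ∩ T = I ∩ T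

/-- `(q, I_𝕋)` is a maximal solution of (Δ-CP^σ). -/
def IsMaxSolS {n : ℕ} (T : Set ℝ) (Ω : Set (EuclideanSpace ℝ (Fin n)))
    (f : EuclideanSpace ℝ (Fin n) → ℝ → EuclideanSpace ℝ (Fin n))
    (t₀ : ℝ) (q₀ : EuclideanSpace ℝ (Fin n))
    (q : ℝ → EuclideanSpace ℝ (Fin n)) (I : Set ℝ) : Prop :=
  IsSolS T Ω f t₀ q₀ q I ∧
    ∀ q₁ I₁, IsSolS T Ω f t₀ q₀ q₁ I₁ → SolExtends T q₁ I₁ q I → I₁ ∩ T = I ∩ T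

/-! ### Elementary facts on the time scale -/

lemma exists_between_of_leftDense {T : Set ℝ} {t₀ b : ℝ} (ht₀ : t₀ ∈ T) (ht₀b : t₀ < b)
    (hld : LeftDense T b) {x : ℝ} (hx : x < b) : ∃ c ∈ T, x < c ∧ c < b := by
  unfold LeftDense tsRho at hld
  have hne : ({s | s ∈ T ∧ s < b}).Nonempty := ⟨t₀, ht₀, ht₀b⟩
  rw [if_pos hne] at hld
  obtain ⟨c, ⟨hcT, hcb⟩, hxc⟩ := exists_lt_of_lt_csSup hne (hld.symm ▸ hx)
  exact ⟨c, hcT, hxc, hcb⟩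

lemma tsSigma_le {T : Set ℝ} {t s : ℝ} (hs : s ∈ T) (hts : t < s) : tsSigma T t ≤ s := by
  unfold tsSigma
  rw [if_pos ⟨s, hs, hts⟩]
  exact csInf_le ⟨t, fun y hy => hy.2.le⟩ ⟨hs, hts⟩

lemma le_tsSigma (T : Set ℝ) (t : ℝ) : t ≤ tsSigma T t := by
  unfold tsSigma
  split_ifs with h
  · exact le_csInf h fun y hy => hy.2.le
  · exact le_rfl

lemma tsSigma_mem {T : Set ℝ} (hT : IsClosed T) {t : ℝ} (ht : t ∈ T) : tsSigma T t ∈ T := by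
  unfold tsSigma
  split_ifs with h
  · have := csInf_mem_closure h ⟨t, fun y hy => hy.2.le⟩
    exact hT.closure_subset_iff.2 (fun y hy => hy.1) this
  · exact ht

lemma exists_between_of_rightDense {T : Set ℝ} {s v : ℝ} (hv : v ∈ T) (hsv : s < v)
    (hrd : tsSigma T s = s) {x : ℝ} (hx : s < x) : ∃ t ∈ T, s < t ∧ t < x := by
  unfold tsSigma at hrd
  have hne : ({y | y ∈ T ∧ s < y}).Nonempty := ⟨v, hv, hsv⟩
  rw [if_pos hne] at hrd
  obtain ⟨c, ⟨hcT, hcb⟩, hxc⟩ := exists_lt_of_csInf_lt hne (hrd.symm ▸ hx)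
  exact ⟨c, hcT, hcb, hxc⟩

lemma countable_rightScattered (T : Set ℝ) : {t | t ∈ T ∧ RightScattered T t}.Countable := by
  refine Set.PairwiseDisjoint.countable_of_Ioo (y := tsSigma T) ?_ (fun x hx => hx.2)
  intro x hx y hy hxy
  change Disjoint (Ioo _ _) (Ioo _ _)
  rw [Set.disjoint_left]
  rintro z ⟨h1, h2⟩ ⟨h3, h4⟩
  rcases lt_or_gt_of_ne hxy with h | h
  · exact absurd (tsSigma_le hy.1 h) (by linarith)
  · exact absurd (tsSigma_le hx.1 h) (by linarith)

/-- Right-scattered points are atoms of the Δ-measure, so a Δ-a.e. property holds at each of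
them. -/
lemma of_ae_of_rightScattered {T S : Set ℝ} (hS : MeasurableSet S) {P : ℝ → Prop}
    (h : ∀ᵐ t ∂((deltaMeasure T).restrict S), P t) {r : ℝ} (hr : r ∈ T) (hrS : r ∈ S)
    (hrs : RightScattered T r) : P r := by
  rw [ae_restrict_iff' hS] at h
  have hle : ENNReal.ofReal (tsGrain T r) • Measure.dirac r ≤ deltaMeasure T := by
    unfold deltaMeasure
    refine le_trans ?_ (Measure.le_add_left le_rfl)
    exact Measure.le_sum (fun r : {t : ℝ // t ∈ T ∧ RightScattered T t} =>
      ENNReal.ofReal (tsGrain T r.1) • Measure.dirac r.1) ⟨r, hr, hrs⟩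
  have h2 := ae_mono hle h
  have hpos : ENNReal.ofReal (tsGrain T r) ≠ 0 := by
    simp only [ne_eq, ENNReal.ofReal_eq_zero, not_le]
    exact sub_pos.2 hrs
  change ∀ᵐ t ∂(ENNReal.ofReal (tsGrain T r) • Measure.dirac r), t ∈ S → P t at h2
  rw [Measure.ae_ennreal_smul_measure_iff hpos, ae_dirac_eq] at h2
  exact h2 hrS

lemma volume_null_of_ae {T S : Set ℝ} (hT : IsClosed T) (hS : MeasurableSet S) (hST : S ⊆ T)
    {P : ℝ → Prop} (h : ∀ᵐ t ∂((deltaMeasure T).restrict S), P t) :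
    volume {t | t ∈ S ∧ ¬ P t} = 0 := by
  rw [ae_restrict_iff' hS] at h
  have hle : volume.restrict T ≤ deltaMeasure T := Measure.le_add_right le_rfl
  have h2 : ∀ᵐ t ∂(volume.restrict T), t ∈ S → P t := ae_mono hle h
  rw [ae_restrict_iff' hT.measurableSet, ae_iff] at h2
  refine measure_mono_null ?_ h2
  rintro t ⟨h1, h3⟩ h4
  exact h3 (h4 (hST h1) h1)

/-! ### Absolutely continuous functions with bounded Δ-derivative are Lipschitz -/

lemma sum_range_parity (g : ℕ → ℝ) (m : ℕ) :
    ∑ i ∈ Finset.range m, g i = ∑ k ∈ Finset.range ((m + 1) / 2), g (2 * k)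
      + ∑ k ∈ Finset.range (m / 2), g (2 * k + 1) := by
  induction m with
  | zero => simp
  | succ m ih =>
    rw [Finset.sum_range_succ, ih]
    rcases Nat.even_or_odd' m with ⟨j, rfl | rfl⟩
    · have h1 : (2 * j + 1) / 2 = j := by omega
      have h2 : (2 * j + 1 + 1) / 2 = j + 1 := by omega
      have h3 : 2 * j / 2 = j := by omega
      rw [h1, h2, h3, Finset.sum_range_succ]
      ring
    · have h1 : (2 * j + 1) / 2 = j := by omega
      have h2 : (2 * j + 1 + 1) / 2 = j + 1 := by omega
      have h3 : (2 * j + 1 + 1 + 1) / 2 = j + 1 := by omega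
      rw [h1, h2, h3, Finset.sum_range_succ (fun k => g (2 * k + 1))]
      ring

lemma exists_seq_of_reflTransGen {r : ℝ → ℝ → Prop} {u t : ℝ}
    (h : Relation.ReflTransGen r u t) :
    ∃ (m : ℕ) (x : ℕ → ℝ), x 0 = u ∧ x m = t ∧ ∀ i < m, r (x i) (x (i + 1)) := by
  induction h with
  | refl => exact ⟨0, fun _ => u, rfl, rfl, by simp⟩
  | @tail s t _ hst ih =>
    obtain ⟨m, x, h0, hm, hx⟩ := ih
    refine ⟨m + 1, fun i => if i ≤ m then x i else t, by simpa using h0, by simp, ?_⟩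
    intro i hi
    rcases Nat.lt_succ_iff_lt_or_eq.1 hi with h | rfl
    · have h1 : i ≤ m := h.le
      have h2 : i + 1 ≤ m := h
      simpa [h1, h2] using hx i h
    · simpa [hm] using hst

/-- One link of a chain joining two points of `[a,c]_𝕋`: either `q` grows at rate at most `C`
across it, or it is contained in the exceptional open set `O`. -/
def ChainStep {n : ℕ} (T : Set ℝ) (a c C : ℝ) (O : Set ℝ) (q : ℝ → EuclideanSpace ℝ (Fin n))
    (s t : ℝ) : Prop :=
  s < t ∧ s ∈ Icc a c ∩ T ∧ t ∈ Icc a c ∩ T ∧ (‖q t - q s‖ ≤ C * (t - s) ∨ Icc s t ⊆ O)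

/-- Links of one parity in a strictly increasing chain are pairwise disjoint closed intervals, as
the definition of absolute continuity requires. The links of this parity not contained in `O` are
replaced by their left endpoint. -/
lemma sum_bad_steps_lt {n : ℕ} {T : Set ℝ} {a c δ ε : ℝ} {O : Set ℝ}
    {q : ℝ → EuclideanSpace ℝ (Fin n)} (hO : volume O < ENNReal.ofReal δ)
    (hac : ∀ (m : ℕ) (u v : ℕ → ℝ),
      (∀ k < m, u k ∈ Icc a c ∩ T) → (∀ k < m, v k ∈ Icc a c ∩ T) → (∀ k < m, u k ≤ v k) →
      (∀ i < m, ∀ j < m, i ≠ j → Disjoint (Icc (u i) (v i)) (Icc (u j) (v j))) →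
      (∑ k ∈ Finset.range m, (v k - u k)) < δ →
      (∑ k ∈ Finset.range m, ‖q (v k) - q (u k)‖) < ε)
    {m : ℕ} {x : ℕ → ℝ} (hx : ∀ i < m, x i < x (i + 1)) (hxm : ∀ i ≤ m, x i ∈ Icc a c ∩ T)
    (p l : ℕ) (hl : ∀ k < l, 2 * k + p < m) :
    ∑ k ∈ Finset.range l, ‖q (if Icc (x (2 * k + p)) (x (2 * k + p + 1)) ⊆ O then
      x (2 * k + p + 1) else x (2 * k + p)) - q (x (2 * k + p))‖ < ε := by
  set v : ℕ → ℝ := fun k => if Icc (x (2 * k + p)) (x (2 * k + p + 1)) ⊆ O then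
      x (2 * k + p + 1) else x (2 * k + p) with hv
  have hmono : ∀ i j, i ≤ j → j ≤ m → x i ≤ x j := by
    intro i j hij
    induction hij with
    | refl => intro _; exact le_rfl
    | step h ih => intro hj; exact (ih (by omega)).trans (hx _ (by omega)).le
  have hvle : ∀ k < l, v k ≤ x (2 * k + p + 1) := by
    intro k hk
    simp only [hv]
    split_ifs
    · exact le_rfl
    · exact (hx _ (hl k hk)).le
  have huv : ∀ k < l, x (2 * k + p) ≤ v k := by
    intro k hk
    simp only [hv]
    split_ifs
    · exact (hx _ (hl k hk)).le
    · exact le_rfl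
  have hlt : ∀ i < l, ∀ j < l, i < j → v i < x (2 * j + p) := by
    intro i hi j hj hij
    have h1 := hl j hj
    calc v i ≤ x (2 * i + p + 1) := hvle i hi
      _ < x (2 * i + p + 1 + 1) := hx _ (by omega)
      _ ≤ x (2 * j + p) := hmono _ _ (by omega) (by omega)
  have hdisj : ∀ i < l, ∀ j < l, i ≠ j →
      Disjoint (Icc (x (2 * i + p)) (v i)) (Icc (x (2 * j + p)) (v j)) := by
    intro i hi j hj hij
    rw [Set.disjoint_left]
    rintro z ⟨h1, h2⟩ ⟨h3, h4⟩
    rcases lt_or_gt_of_ne hij with h | h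
    · linarith [hlt i hi j hj h]
    · linarith [hlt j hj i hi h]
  refine hac l (fun k => x (2 * k + p)) v (fun k hk => hxm _ (hl k hk).le) ?_ huv hdisj ?_
  · intro k hk
    simp only [hv]
    split_ifs
    · exact hxm _ (hl k hk)
    · exact hxm _ (hl k hk).le
  · -- the half-open pieces `(x, v]` are disjoint subsets of `O`, empty for the collapsed links
    have hsub : (⋃ k ∈ Finset.range l, Ioc (x (2 * k + p)) (v k)) ⊆ O := by
      intro z hz
      simp only [Set.mem_iUnion, Finset.mem_range] at hz
      obtain ⟨k, hk, hz1, hz2⟩ := hz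
      simp only [hv] at hz2
      split_ifs at hz2 with h
      · exact h ⟨hz1.le, hz2⟩
      · exact absurd hz1 (not_lt.2 hz2)
    have hvol := measure_mono (μ := volume) hsub
    rw [measure_biUnion_finset (fun i hi j hj hij =>
      (hdisj i (by simpa using hi) j (by simpa using hj) hij).mono Ioc_subset_Icc_self
        Ioc_subset_Icc_self) (fun _ _ => measurableSet_Ioc)] at hvol
    simp only [Real.volume_Ioc] at hvol
    rw [← ENNReal.ofReal_sum_of_nonneg (fun k hk => sub_nonneg.2 (huv k (by simpa using hk)))]
      at hvol
    exact (ENNReal.ofReal_lt_ofReal_iff_of_nonneg (Finset.sum_nonneg fun k hk =>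
      sub_nonneg.2 (huv k (by simpa using hk)))).1 (hvol.trans_lt hO)

/-- Induction on the time scale: if `O` is open and covers `c`, the right-scattered points and the
points where the Δ-derivative bound fails, then any two points of `[a,c]_𝕋` are joined by a finite
chain. -/
lemma chain_exists {n : ℕ} {T : Set ℝ} (hT : IsClosed T) {a c M ε : ℝ} (hε : 0 < ε)
    {O : Set ℝ} (hO : IsOpen O) {q g : ℝ → EuclideanSpace ℝ (Fin n)}
    (hsc : ∀ r ∈ Ico a c ∩ T, RightScattered T r → HasDeltaDerivAt T q (g r) r ∧ ‖g r‖ ≤ M)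
    (hrd : ∀ r ∈ Icc a c ∩ T, r ∉ O →
      tsSigma T r = r ∧ HasDeltaDerivAt T q (g r) r ∧ ‖g r‖ ≤ M)
    {u v : ℝ} (hu : u ∈ Icc a c ∩ T) (hv : v ∈ Icc a c ∩ T) (huv : u ≤ v) :
    Relation.ReflTransGen (ChainStep T a c (M + ε) O q) u v := by
  set R := Relation.ReflTransGen (ChainStep T a c (M + ε) O q) u with hR
  have key : ∀ (d w : EuclideanSpace ℝ (Fin n)) (h : ℝ), ‖w‖ ≤ M → ‖d - h • w‖ ≤ ε * |h| →
      ‖d‖ ≤ (M + ε) * |h| := by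
    intro d w h hw hd
    have h1 : ‖d‖ ≤ ‖d - h • w‖ + ‖h • w‖ := by
      simpa using norm_add_le (d - h • w) (h • w)
    rw [norm_smul, Real.norm_eq_abs] at h1
    nlinarith [mul_le_mul_of_nonneg_left hw (abs_nonneg h)]
  -- every point `r` of `[a,c]_𝕋` forms a link with each nearby point; for `r` outside `O`, where
  -- `r` is right-dense, the bounded Δ-derivative gives it on both sides
  have hloc : ∀ r ∈ Icc a c ∩ T, ∃ η > 0, ∀ s ∈ Icc a c ∩ T, |s - r| < η →
      (r < s → ChainStep T a c (M + ε) O q r s) ∧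
      (s < r → ChainStep T a c (M + ε) O q s r) := by
    intro r hr
    by_cases hrO : r ∈ O
    · obtain ⟨η, hη, hball⟩ := Metric.isOpen_iff.1 hO r hrO
      refine ⟨η, hη, fun s hs hsr => ⟨fun h => ⟨h, hr, hs, Or.inr ?_⟩,
        fun h => ⟨h, hs, hr, Or.inr ?_⟩⟩⟩
      all_goals
        rintro z ⟨hz1, hz2⟩
        apply hball
        rw [abs_lt] at hsr
        rw [Metric.mem_ball, Real.dist_eq, abs_lt]
        constructor <;> linarith
    · obtain ⟨hσ, hd, hM⟩ := hrd r hr hrO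
      obtain ⟨U, hU, hUs⟩ := hd ε hε
      obtain ⟨η, hη, hball⟩ := Metric.mem_nhds_iff.1 hU
      refine ⟨η, hη, fun s hs hsr => ?_⟩
      have h1 := hUs s ⟨hball (by rwa [Metric.mem_ball, Real.dist_eq]), hs.2⟩
      rw [hσ] at h1
      have h2 := key _ _ _ hM h1
      refine ⟨fun h => ⟨h, hr, hs, Or.inl ?_⟩, fun h => ⟨h, hs, hr, Or.inl ?_⟩⟩
      · rw [norm_sub_rev]
        rwa [abs_of_neg (by linarith), neg_sub] at h2
      · rwa [abs_of_pos (by linarith)] at h2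
  set A : Set ℝ := {t | t ∈ Icc u v ∩ T ∧ R t} with hA
  have huA : u ∈ A := ⟨⟨⟨le_rfl, huv⟩, hu.2⟩, Relation.ReflTransGen.refl⟩
  have hbdd : BddAbove A := ⟨v, fun t ht => ht.1.1.2⟩
  have hIcc : Icc u v ⊆ Icc a c := Icc_subset_Icc hu.1.1 hv.1.2
  set s := sSup A with hs
  have hsmem : s ∈ Icc u v ∩ T :=
    (isClosed_Icc.inter hT).closure_subset_iff.2 (fun t ht => ht.1)
      (csSup_mem_closure ⟨u, huA⟩ hbdd)
  have hsac : s ∈ Icc a c ∩ T := ⟨hIcc hsmem.1, hsmem.2⟩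
  obtain ⟨η, hη, hstep⟩ := hloc s hsac
  have hsR : R s := by
    obtain ⟨t, htA, hts⟩ := exists_lt_of_lt_csSup ⟨u, huA⟩ (show s - η < sSup A by linarith)
    rcases (le_csSup hbdd htA).lt_or_eq with h | h
    · have h' : t < s := h
      exact htA.2.tail ((hstep t ⟨hIcc htA.1.1, htA.1.2⟩
        (by rw [abs_lt]; constructor <;> linarith)).2 h')
    · have h' : t = s := h
      exact h' ▸ htA.2
  rcases hsmem.1.2.lt_or_eq with hlt | heq
  · exfalso
    obtain ⟨t, htT, hst, htv, hlink⟩ : ∃ t ∈ T, s < t ∧ t ≤ v ∧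
        ChainStep T a c (M + ε) O q s t := by
      rcases (le_tsSigma T s).lt_or_eq with hsσ | hsσ
      · have hσv := tsSigma_le hv.2 hlt
        have hσT := tsSigma_mem hT hsmem.2
        obtain ⟨hd, hM⟩ := hsc s ⟨⟨hsac.1.1, hlt.trans_le hv.1.2⟩, hsmem.2⟩ hsσ
        refine ⟨_, hσT, hsσ, hσv, hsσ, hsac, ⟨hIcc ⟨hsmem.1.1.trans hsσ.le, hσv⟩, hσT⟩,
          Or.inl ?_⟩
        obtain ⟨U, hU, hUs⟩ := hd ε hε
        have h2 := key _ _ _ hM (hUs s ⟨mem_of_mem_nhds hU, hsmem.2⟩)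
        rwa [abs_of_pos (by linarith)] at h2
      · obtain ⟨t, htT, hst, ht⟩ := exists_between_of_rightDense hv.2 hlt hsσ.symm
          (show s < min v (s + η) from lt_min hlt (by linarith))
        have h1 := ht.trans_le (min_le_left _ _)
        have h2 := ht.trans_le (min_le_right _ _)
        exact ⟨t, htT, hst, h1.le, (hstep t ⟨hIcc ⟨hsmem.1.1.trans hst.le, h1.le⟩, htT⟩
          (by rw [abs_lt]; constructor <;> linarith)).1 hst⟩
    have : t ≤ s := le_csSup hbdd ⟨⟨⟨hsmem.1.1.trans hst.le, htv⟩, htT⟩, hsR.tail hlink⟩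
    linarith
  · exact heq ▸ hsR

/-- An absolutely continuous function on `[a,c]_𝕋` whose Δ-derivative is bounded by `M` Δ-a.e. is
`M`-Lipschitz there. -/
lemma norm_sub_le_of_deltaAC {n : ℕ} {T : Set ℝ} (hT : IsClosed T) {a c M : ℝ}
    {q g : ℝ → EuclideanSpace ℝ (Fin n)} (hM0 : 0 ≤ M) (hac : DeltaAC T a c q)
    (hae : ∀ᵐ t ∂((deltaMeasure T).restrict (Ico a c ∩ T)),
      HasDeltaDerivAt T q (g t) t ∧ ‖g t‖ ≤ M)
    {u v : ℝ} (hu : u ∈ Icc a c ∩ T) (hv : v ∈ Icc a c ∩ T) (huv : u ≤ v) :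
    ‖q v - q u‖ ≤ M * (v - u) := by
  have hS : MeasurableSet (Ico a c ∩ T) := measurableSet_Ico.inter hT.measurableSet
  have main : ∀ ε > 0, ‖q v - q u‖ ≤ (M + ε) * (v - u) + (ε + ε) := by
    intro ε hε
    obtain ⟨δ, hδ, hδac⟩ := hac ε hε
    -- at a right-scattered point the Δ-derivative says nothing about the rate of growth from the
    -- left, and the Δ-a.e. hypothesis says nothing about `c`: both go into the null set
    set N : Set ℝ := {t | t ∈ Ico a c ∩ T ∧ ¬ (HasDeltaDerivAt T q (g t) t ∧ ‖g t‖ ≤ M)} ∪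
      ({t | t ∈ T ∧ RightScattered T t} ∪ {c}) with hN
    have hN0 : volume N = 0 := by
      rw [hN, measure_union_null_iff, measure_union_null_iff]
      exact ⟨volume_null_of_ae hT hS inter_subset_right hae,
        (countable_rightScattered T).measure_zero _, by simp⟩
    obtain ⟨O, hNO, hOo, hOv⟩ := Set.exists_isOpen_lt_of_lt N (ENNReal.ofReal δ)
      (μ := volume) (by rw [hN0]; simpa using hδ)
    have hchain := chain_exists hT hε hOo (q := q) (g := g) (a := a) (c := c) (M := M)
      (fun r hr hrs => of_ae_of_rightScattered hS hae hr.2 hr hrs) (by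
        intro r hr hrO
        have hrN : r ∉ N := fun h => hrO (hNO h)
        simp only [hN, Set.mem_union, Set.mem_ofPred_eq, Set.mem_singleton_iff, not_or] at hrN
        obtain ⟨h1, h2, h3⟩ := hrN
        refine ⟨?_, ?_⟩
        · by_contra h
          exact h2 ⟨hr.2, lt_of_le_of_ne (le_tsSigma T r) (Ne.symm h)⟩
        · by_contra h
          exact h1 ⟨⟨⟨hr.1.1, lt_of_le_of_ne hr.1.2 h3⟩, hr.2⟩, h⟩) hu hv huv
    obtain ⟨m, x, hx0, hxm, hx⟩ := exists_seq_of_reflTransGen hchain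
    have hmem : ∀ i ≤ m, x i ∈ Icc a c ∩ T := by
      intro i hi
      rcases hi.lt_or_eq with h | rfl
      · exact (hx i h).2.1
      · rwa [hxm]
    set B : ℕ → ℝ := fun i => ‖q (if Icc (x i) (x (i + 1)) ⊆ O then x (i + 1) else x i)
      - q (x i)‖ with hB
    have hlink : ∀ i ∈ Finset.range m, ‖q (x (i + 1)) - q (x i)‖ ≤
        (M + ε) * (x (i + 1) - x i) + B i := by
      intro i hi
      obtain ⟨h1, _, _, h4⟩ := hx i (by simpa using hi)
      have h5 : 0 ≤ (M + ε) * (x (i + 1) - x i) :=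
        mul_nonneg (by linarith) (by linarith)
      simp only [hB]
      split_ifs with h
      · linarith
      · simpa using h4.resolve_right h
    have hsum : ‖q v - q u‖ ≤ ∑ i ∈ Finset.range m, ‖q (x (i + 1)) - q (x i)‖ := by
      rw [← hx0, ← hxm, ← Finset.sum_range_sub (fun i => q (x i))]
      exact norm_sum_le _ _
    have hBsum : ∑ i ∈ Finset.range m, B i ≤ ε + ε := by
      rw [sum_range_parity]
      exact add_le_add
        (sum_bad_steps_lt hOv hδac (fun i hi => (hx i hi).1) hmem 0 _ (fun k hk => by omega)).le
        (sum_bad_steps_lt hOv hδac (fun i hi => (hx i hi).1) hmem 1 _ (fun k hk => by omega)).le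
    calc ‖q v - q u‖ ≤ _ := hsum
      _ ≤ ∑ i ∈ Finset.range m, ((M + ε) * (x (i + 1) - x i) + B i) := Finset.sum_le_sum hlink
      _ = (M + ε) * (v - u) + ∑ i ∈ Finset.range m, B i := by
        rw [Finset.sum_add_distrib, ← Finset.mul_sum, Finset.sum_range_sub, hx0, hxm]
      _ ≤ _ := by linarith
  refine le_of_forall_pos_le_add fun e he => ?_
  have hw : 0 ≤ v - u := sub_nonneg.2 huv
  have h := main (e / (v - u + 2)) (by positivity)
  have h2 : e / (v - u + 2) * (v - u + 2) = e := div_mul_cancel₀ _ (by positivity)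
  nlinarith

lemma deltaAC_of_lipschitz {n : ℕ} {T : Set ℝ} {a b M : ℝ} {q : ℝ → EuclideanSpace ℝ (Fin n)}
    (hM : 0 ≤ M)
    (h : ∀ u ∈ Icc a b ∩ T, ∀ v ∈ Icc a b ∩ T, u ≤ v → ‖q v - q u‖ ≤ M * (v - u)) :
    DeltaAC T a b q := by
  intro ε hε
  refine ⟨ε / (M + 1), by positivity, fun m u v hu hv huv _ hsum => ?_⟩
  calc ∑ k ∈ Finset.range m, ‖q (v k) - q (u k)‖
      ≤ ∑ k ∈ Finset.range m, M * (v k - u k) := Finset.sum_le_sum fun k hk => by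
        have hk := Finset.mem_range.1 hk
        exact h _ (hu k hk) _ (hv k hk) (huv k hk)
    _ = M * ∑ k ∈ Finset.range m, (v k - u k) := by rw [Finset.mul_sum]
    _ ≤ M * (ε / (M + 1)) := mul_le_mul_of_nonneg_left hsum.le hM
    _ < (M + 1) * (ε / (M + 1)) := by
        have : 0 < ε / (M + 1) := by positivity
        linarith
    _ = ε := mul_div_cancel₀ _ (by positivity)

lemma DeltaAC.continuousOn {n : ℕ} {T : Set ℝ} {a b : ℝ} {q : ℝ → EuclideanSpace ℝ (Fin n)}
    (h : DeltaAC T a b q) : ContinuousOn q (Icc a b ∩ T) := by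
  rw [Metric.continuousOn_iff]
  intro t ht ε hε
  obtain ⟨δ, hδ, hac⟩ := h ε hε
  refine ⟨δ, hδ, fun s hs hst => ?_⟩
  have key : ∀ y z : ℝ, y ∈ Icc a b ∩ T → z ∈ Icc a b ∩ T → y ≤ z → z - y < δ →
      ‖q z - q y‖ < ε := by
    intro y z hy hz hyz hlt
    have := hac 1 (fun _ => y) (fun _ => z) (fun _ _ => hy) (fun _ _ => hz) (fun _ _ => hyz)
      (fun i hi j hj hij => by omega) (by simpa using hlt)
    simpa using this
  rw [Real.dist_eq, abs_lt] at hst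
  rw [dist_eq_norm]
  rcases le_total s t with hle | hle
  · rw [norm_sub_rev]
    exact key s t hs ht hle (by linarith)
  · exact key t s ht hs hle (by linarith)

/-! ### Extension of the solution to the endpoint -/

theorem stmt13 {n : ℕ}
    (T : Set ℝ) (hTclosed : IsClosed T) (hTnontriv : T.Nontrivial)
    (Ω : Set (EuclideanSpace ℝ (Fin n))) (hΩopen : IsOpen Ω) (hΩne : Ω.Nonempty)
    (f : EuclideanSpace ℝ (Fin n) → ℝ → EuclideanSpace ℝ (Fin n)) (hf : DeltaCaratheodory T Ω f)
    (t₀ : ℝ) (ht₀ : t₀ ∈ T) (q₀ : EuclideanSpace ℝ (Fin n)) (hq₀ : q₀ ∈ Ω)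
    (hmin : IsLeast T t₀)
    (hinf : HInfty T Ω f) (hrd : HrdLocLip T Ω f) (hstab : HforwStab T Ω f)
    (q : ℝ → EuclideanSpace ℝ (Fin n)) (I : Set ℝ) (hq : IsMaxSol T Ω f t₀ q₀ q I)
    (hng : I ∩ T ≠ T)
    (b : ℝ) (hb : b ∈ T) (ht₀b : t₀ < b) (hld : LeftDense T b)
    (hIT : I ∩ T = Ico t₀ b ∩ T) :
    ¬ ∃ qb ∈ Ω, Tendsto q (nhdsWithin b (Ico t₀ b ∩ T)) (nhds qb) := by
  rintro ⟨qb, hqb, hlim⟩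
  obtain ⟨⟨hmemI, hqΩ, hsol⟩, hmax⟩ := hq
  have hbtw : ∀ x < b, ∃ c ∈ T, x < c ∧ c < b := fun x hx =>
    exists_between_of_leftDense ht₀ ht₀b hld hx
  have hsolc : ∀ c ∈ T, t₀ < c → c < b → IsSolIcc T Ω f t₀ q₀ q t₀ c := by
    intro c hcT h1 h2
    refine hsol t₀ ?_ c ?_ (Or.inl ⟨hmin, rfl, h1⟩)
    · rw [hIT]; exact ⟨⟨le_rfl, ht₀b⟩, ht₀⟩
    · rw [hIT]; exact ⟨⟨h1.le, h2⟩, hcT⟩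
  set q₁ : ℝ → EuclideanSpace ℝ (Fin n) := Function.update q b qb with hq₁
  have hq₁b : q₁ b = qb := by simp [hq₁]
  have hq₁lt : ∀ t, t < b → q₁ t = q t := fun t ht => by simp [hq₁, ht.ne]
  have hΩ₁ : ∀ t ∈ Icc t₀ b ∩ T, q₁ t ∈ Ω := by
    rintro t ⟨⟨h1, h2⟩, h3⟩
    rcases h2.lt_or_eq with h | rfl
    · rw [hq₁lt t h]
      exact hqΩ t (hIT ▸ ⟨⟨h1, h⟩, h3⟩)
    · rwa [hq₁b]
  have hset : Icc t₀ b ∩ T = insert b (Ico t₀ b ∩ T) := by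
    rw [← Ico_insert_right ht₀b.le, insert_inter_of_mem hb]
  have hcont : ContinuousOn q₁ (Icc t₀ b ∩ T) := by
    rintro t ⟨⟨h1, h2⟩, h3⟩
    rcases h2.lt_or_eq with h | rfl
    · obtain ⟨c, hcT, htc, hcb⟩ := hbtw t h
      have hc := (hsolc c hcT (h1.trans_lt htc) hcb).2.1.continuousOn t ⟨⟨h1, htc.le⟩, h3⟩
      have hc' : ContinuousWithinAt q (Icc t₀ b ∩ T) t := by
        refine hc.mono_of_mem_nhdsWithin ?_
        filter_upwards [self_mem_nhdsWithin, mem_nhdsWithin_of_mem_nhds (Iio_mem_nhds htc)]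
          with z hz hz2
        exact ⟨⟨hz.1.1, le_of_lt hz2⟩, hz.2⟩
      refine hc'.congr_of_eventuallyEq ?_ (hq₁lt t h)
      filter_upwards [mem_nhdsWithin_of_mem_nhds (Iio_mem_nhds h)] with z hz
      exact hq₁lt z hz
    · rw [hset, continuousWithinAt_insert_self]
      unfold ContinuousWithinAt
      rw [hq₁b]
      refine hlim.congr' ?_
      filter_upwards [self_mem_nhdsWithin] with z hz
      exact (hq₁lt z hz.1.2).symm
  have hK : IsCompact (q₁ '' (Icc t₀ b ∩ T)) :=
    (isCompact_Icc.inter_right hTclosed).image_of_continuousOn hcont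
  obtain ⟨M, hM0, hM⟩ := hinf _ (by rintro _ ⟨t, ht, rfl⟩; exact hΩ₁ t ht) hK t₀ ht₀ b hb ht₀b
  have hlip : ∀ u ∈ Ico t₀ b ∩ T, ∀ v ∈ Ico t₀ b ∩ T, u ≤ v →
      ‖q v - q u‖ ≤ M * (v - u) := by
    intro u hu v hv huv
    rcases huv.lt_or_eq with hlt | rfl
    · have hs := hsolc v hv.2 (hu.1.1.trans_lt hlt) hv.1.2
      refine norm_sub_le_of_deltaAC hTclosed (g := fun t => f (q t) t) hM0 hs.2.1 ?_
        ⟨⟨hu.1.1, huv⟩, hu.2⟩ ⟨⟨hv.1.1, le_rfl⟩, hv.2⟩ huv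
      have hM' := ae_restrict_of_ae_restrict_of_subset
        (inter_subset_inter_left T (Ico_subset_Ico_right hv.1.2.le : Ico t₀ v ⊆ Ico t₀ b)) hM
      filter_upwards [hs.2.2.2, hM',
        ae_restrict_mem (measurableSet_Ico.inter hTclosed.measurableSet)] with t h1 h2 h3
      have htb : t < b := h3.1.2.trans hv.1.2
      exact ⟨h1, h2 _ ⟨t, ⟨⟨h3.1.1, htb.le⟩, h3.2⟩, hq₁lt t htb⟩⟩
    · simp
  have hne : (nhdsWithin b (Ico t₀ b ∩ T)).NeBot := by
    rw [← mem_closure_iff_nhdsWithin_neBot, Metric.mem_closure_iff]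
    intro ε hε
    obtain ⟨c, hcT, hc1, hc2⟩ := hbtw (max t₀ (b - ε)) (max_lt ht₀b (by linarith))
    refine ⟨c, ⟨⟨(le_max_left _ _).trans hc1.le, hc2⟩, hcT⟩, ?_⟩
    have := (le_max_right t₀ (b - ε)).trans_lt hc1
    rw [Real.dist_eq, abs_of_pos (by linarith)]
    linarith
  have hlip₁ : ∀ u ∈ Icc t₀ b ∩ T, ∀ v ∈ Icc t₀ b ∩ T, u ≤ v →
      ‖q₁ v - q₁ u‖ ≤ M * (v - u) := by
    rintro u ⟨⟨hu1, hu2⟩, hu3⟩ v ⟨⟨hv1, hv2⟩, hv3⟩ huv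
    rcases huv.lt_or_eq with hlt | rfl
    swap
    · simp
    have hub : u < b := hlt.trans_le hv2
    rw [hq₁lt u hub]
    rcases hv2.lt_or_eq with h | rfl
    · rw [hq₁lt v h]
      exact hlip u ⟨⟨hu1, hub⟩, hu3⟩ v ⟨⟨hv1, h⟩, hv3⟩ huv
    · rw [hq₁b]
      have h1 : Tendsto (fun t => ‖q t - q u‖) (nhdsWithin v (Ico t₀ v ∩ T))
          (nhds ‖qb - q u‖) := (hlim.sub_const _).norm
      have h2 : Tendsto (fun t => M * (t - u)) (nhdsWithin v (Ico t₀ v ∩ T))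
          (nhds (M * (v - u))) := by
        have : Continuous fun t : ℝ => M * (t - u) := by fun_prop
        exact (this.tendsto v).mono_left nhdsWithin_le_nhds
      refine le_of_tendsto_of_tendsto h1 h2 ?_
      filter_upwards [self_mem_nhdsWithin, mem_nhdsWithin_of_mem_nhds (Ioi_mem_nhds hub)]
        with t ht ht2
      exact hlip u ⟨⟨hu1, hub⟩, hu3⟩ t ht (le_of_lt ht2)
  have hderiv : ∀ᵐ t ∂((deltaMeasure T).restrict (Ico t₀ b ∩ T)),
      HasDeltaDerivAt T q₁ (f (q₁ t) t) t := by
    have hseq : ∀ k : ℕ, ∃ c ∈ T, max t₀ (b - 1 / ((k : ℝ) + 1)) < c ∧ c < b := fun k =>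
      hbtw _ (max_lt ht₀b (by
        have : (0 : ℝ) < 1 / ((k : ℝ) + 1) := by positivity
        linarith))
    choose c hcT hc1 hc2 using hseq
    have hcover : Ico t₀ b ∩ T ⊆ ⋃ k, Ico t₀ (c k) ∩ T := by
      rintro t ⟨⟨h1, h2⟩, h3⟩
      obtain ⟨k, hk⟩ := exists_nat_one_div_lt (sub_pos.2 h2)
      refine mem_iUnion.2 ⟨k, ⟨h1, ?_⟩, h3⟩
      have := (le_max_right t₀ _).trans_lt (hc1 k)
      linarith
    have hall : ∀ᵐ t ∂((deltaMeasure T).restrict (⋃ k, Ico t₀ (c k) ∩ T)),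
        HasDeltaDerivAt T q (f (q t) t) t := by
      rw [ae_restrict_iUnion_iff]
      exact fun k => (hsolc (c k) (hcT k) ((le_max_left _ _).trans_lt (hc1 k)) (hc2 k)).2.2.2
    filter_upwards [ae_restrict_of_ae_restrict_of_subset hcover hall,
      ae_restrict_mem (measurableSet_Ico.inter hTclosed.measurableSet)] with t ht htm
    have htb : t < b := htm.1.2
    -- left-density of `b` keeps `σ t` below `b`, where `q₁` agrees with `q`
    have hσ : tsSigma T t < b := by
      obtain ⟨d, hdT, hd1, hd2⟩ := hbtw t htb
      exact (tsSigma_le hdT hd1).trans_lt hd2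
    intro ε hε
    obtain ⟨U, hU, hUs⟩ := ht ε hε
    refine ⟨U ∩ Iio b, inter_mem hU (Iio_mem_nhds htb), ?_⟩
    rintro s ⟨⟨hsU, hsb⟩, hsT⟩
    rw [hq₁lt _ hσ, hq₁lt s hsb, hq₁lt t htb]
    exact hUs s ⟨hsU, hsT⟩
  have hq₁t₀ : q₁ t₀ = q₀ := by
    obtain ⟨c, hcT, h1, h2⟩ := hbtw t₀ ht₀b
    rw [hq₁lt t₀ ht₀b]
    exact (hsolc c hcT h1 h2).2.2.1
  have hsol₁ : IsSol T Ω f t₀ q₀ q₁ (Icc t₀ b) := by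
    refine ⟨⟨ordConnected_Icc, t₀, ⟨⟨le_rfl, ht₀b.le⟩, ht₀⟩, b, ⟨⟨ht₀b.le, le_rfl⟩, hb⟩,
      Or.inl ⟨hmin, rfl, ht₀b⟩⟩, hΩ₁, ?_⟩
    rintro a ha d hd (⟨_, rfl, had⟩ | ⟨hg, _, _⟩ | ⟨hnl, _⟩)
    · have hsub : Icc a d ∩ T ⊆ Icc a b ∩ T := inter_subset_inter_left T
        (Icc_subset_Icc_right hd.1.2)
      exact ⟨fun t ht => hΩ₁ t (hsub ht), deltaAC_of_lipschitz hM0 fun u hu v hv huv =>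
        hlip₁ u (hsub hu) v (hsub hv) huv, hq₁t₀, ae_restrict_of_ae_restrict_of_subset
          (inter_subset_inter_left T (Ico_subset_Ico_right hd.1.2)) hderiv⟩
    · exact absurd (hg.2 hb) (not_le.2 ht₀b)
    · exact absurd hmin hnl
  have hext : SolExtends T q₁ (Icc t₀ b) q I := by
    rw [SolExtends, hIT]
    exact ⟨inter_subset_inter_left T Ico_subset_Icc_self, fun t ht => hq₁lt t ht.1.2⟩
  have heq := hmax q₁ _ hsol₁ hext
  rw [hIT] at heq
  have : b ∈ Ico t₀ b ∩ T := heq ▸ ⟨⟨ht₀b.le, le_rfl⟩, hb⟩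
  exact lt_irrefl b this.1.2

end
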